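/- Let ℋ be a complex Hilbert space, A ∈ B(ℋ), and k ≥ 2 with k ≤ dim ℋ. Then Ω_k(A) = ⋂{Ω_{k−1}(A + 2e^{iξ}‖A‖P) : ξ ∈ [0,2π), P ∈ P_1}, i.e., Ω_k(A) is the intersection of the sets Ω_{k−1}(A + 2e^{iξ}‖A‖P) over all ξ ∈ [0,2π) and all rank-one orthogonal projections P on ℋ. -/

import Mathlib

noncomputable section

open scoped InnerProductSpace
open Complex

variable {H : Type*} [NormedAddCommGroup H] [InnerProductSpace ℂ H] [CompleteSpace H]

/-- `P` is an orthogonal projection: self-adjoint and idempotent. -/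
def IsOrthProj (P : H →L[ℂ] H) : Prop :=
  IsSelfAdjoint P ∧ P ∘L P = P

/-- The rank of a bounded operator, as a cardinal. -/
def opRank (F : H →L[ℂ] H) : Cardinal :=
  Module.rank ℂ (LinearMap.range (F : H →ₗ[ℂ] H))

/-- The rank-`k` numerical range `Λ_k(A)`. -/
def rankKRange (k : ℕ) (A : H →L[ℂ] H) : Set ℂ :=
  { lam | ∃ P : H →L[ℂ] H, IsOrthProj P ∧ opRank P = k ∧ P ∘L A ∘L P = lam • P }

/-- The classical numerical range `W(A)`. -/
def numRange (A : H →L[ℂ] H) : Set ℂ :=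
  { z | ∃ x : H, ‖x‖ = 1 ∧ ⟪x, A x⟫_ℂ = z }

/-- `λ_k(T)`: the supremum over `k`-dimensional compressions of the `k`-th largest
eigenvalue of the compression (Courant–Fischer form: sup over `k`-dimensional
subspaces of the infimum of the Rayleigh quotient). -/
def lambdaSA (k : ℕ) (T : H →L[ℂ] H) : ℝ :=
  sSup { t : ℝ | ∃ V : Submodule ℂ H, Module.finrank ℂ V = k ∧
    ∀ x ∈ V, ‖x‖ = 1 → t ≤ (⟪x, T x⟫_ℂ).re }

/-- The real part `(T + T*)/2` of an operator. -/
def reOp (T : H →L[ℂ] H) : H →L[ℂ] H :=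
  (2 : ℂ)⁻¹ • (T + ContinuousLinearMap.adjoint T)

/-- The set `Ω_k(A)`. -/
def omegaK (k : ℕ) (A : H →L[ℂ] H) : Set ℂ :=
  { μ | ∀ ξ ∈ Set.Ico (0 : ℝ) (2 * Real.pi),
      (Complex.exp (ξ * Complex.I) * μ).re ≤ lambdaSA k (reOp (Complex.exp (ξ * Complex.I) • A)) }

/-! Put `T = Re(e^{iθ} A)`. Choosing `ξ` with `e^{iθ} e^{iξ} = -1` reduces the theorem to
`λ_{k+1}(T) = inf_P λ_k(T - 2M P)`, where `P` runs over the rank-one projections and `‖T‖ ≤ M`.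

The inequality `≤` is Weyl's: intersect a test subspace with `ker P`. For `≥`, the supremum `λ_1(T)`
need not be attained, so take a unit vector `u` almost attaining it. Cauchy–Schwarz for the positive
operator `λ_1(T) - T` makes `u` an approximate eigenvector, so the form of `T` almost splits along
`ℂ u ⊕ u^⊥`. Subtracting `2M P_u` pushes the direction `u` below `-‖T‖`, so a lower bound for
`T - 2M P_u` on a `k`-dimensional `V` is inherited by `T` on the `(k+1)`-dimensional space
`V + ℂ u`, up to a multiple of the error. -/

theorem exists_mem_Ico_exp_mul_I_eq {z : ℂ} (hz : ‖z‖ = 1) :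
    ∃ ξ ∈ Set.Ico (0 : ℝ) (2 * Real.pi), exp (ξ * I) = z := by
  refine ⟨toIcoMod Real.two_pi_pos 0 z.arg, toIcoMod_mem_Ico' Real.two_pi_pos _, ?_⟩
  have hexp : exp (z.arg * I) = z := by simpa [hz] using norm_mul_exp_arg_mul_I z
  refine Eq.trans ?_ hexp
  rw [← self_sub_toIcoDiv_mul, exp_eq_exp_iff_exists_int]
  exact ⟨-toIcoDiv Real.two_pi_pos 0 z.arg, by push_cast; ring⟩

section Subspaces

universe u

variable {K : Type*} {V V' : Type u} [DivisionRing K] [AddCommGroup V] [Module K V]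
  [AddCommGroup V'] [Module K V']

theorem finrank_sup_span_singleton_of_notMem {U : Submodule K V} [Module.Finite K U] {v : V}
    (hv : v ∉ U) : Module.finrank K ↥(U ⊔ K ∙ v) = Module.finrank K U + 1 := by
  have hv0 : v ≠ 0 := fun h => hv (h ▸ U.zero_mem)
  have hdisj : Disjoint U (K ∙ v) := (Submodule.disjoint_span_singleton' hv0).2 hv
  have hsum := Submodule.finrank_sup_add_finrank_inf_eq U (K ∙ v)
  rwa [hdisj.eq_bot, finrank_bot, add_zero, finrank_span_singleton hv0] at hsum

theorem exists_le_finrank_eq {n : ℕ} {U : Submodule K V} (h : (n : Cardinal) ≤ Module.rank K U) :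
    ∃ W ≤ U, Module.finrank K W = n := by
  obtain ⟨s, hcard, hs⟩ := Module.le_rank_iff_exists_finset.1 h
  refine ⟨(Submodule.span K (s : Set U)).map U.subtype, Submodule.map_subtype_le _ _, ?_⟩
  rw [Submodule.finrank_map_subtype_eq, finrank_span_finset_eq_card hs, hcard]

theorem exists_le_inf_ker_finrank_eq {k r : ℕ} {U : Submodule K V} {f : V →ₗ[K] V'}
    (hU : ((k + r : ℕ) : Cardinal) ≤ Module.rank K U) (hf : f.rank ≤ r) :
    ∃ W ≤ U ⊓ LinearMap.ker f, Module.finrank K W = k := by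
  have hrange : (f.domRestrict U).rank ≤ r := (LinearMap.rank_comp_le_left U.subtype f).trans hf
  have hker : (k : Cardinal) ≤ Module.rank K (LinearMap.ker (f.domRestrict U)) := by
    have hsum := LinearMap.rank_range_add_rank_ker (f.domRestrict U)
    have hle : (k : Cardinal) + r ≤ Module.rank K (LinearMap.ker (f.domRestrict U)) + r :=
      calc (k : Cardinal) + r = ((k + r : ℕ) : Cardinal) := (Nat.cast_add k r).symm
        _ ≤ Module.rank K U := hU
        _ = Module.rank K (LinearMap.ker (f.domRestrict U)) + (f.domRestrict U).rank := by
          rw [add_comm, ← hsum, LinearMap.rank]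
        _ ≤ Module.rank K (LinearMap.ker (f.domRestrict U)) + r := by gcongr
    exact (Cardinal.add_le_add_iff_of_lt_aleph0 Cardinal.natCast_lt_aleph0).1 hle
  obtain ⟨W, hW, hdim⟩ := exists_le_finrank_eq hker
  refine ⟨W.map U.subtype, ?_, by rw [Submodule.finrank_map_subtype_eq, hdim]⟩
  rintro _ ⟨w, hw, rfl⟩
  exact ⟨w.2, hW hw⟩

end Subspaces

section QuadraticForm

open RCLike

variable {𝕜 E : Type*} [RCLike 𝕜] [NormedAddCommGroup E] [InnerProductSpace 𝕜 E]
  {T : E →L[𝕜] E}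

theorem reApplyInnerSelf_add_apply (T S : E →L[𝕜] E) (x : E) :
    (T + S).reApplyInnerSelf x = T.reApplyInnerSelf x + S.reApplyInnerSelf x := by
  simp only [ContinuousLinearMap.reApplyInnerSelf_apply, add_apply, inner_add_left, map_add]

theorem reApplyInnerSelf_smul_apply (hT : T.IsSymmetric) (c : 𝕜) (x : E) :
    (c • T).reApplyInnerSelf x = re c * T.reApplyInnerSelf x := by
  rw [ContinuousLinearMap.reApplyInnerSelf_apply, smul_apply, inner_smul_left,
    ← hT.coe_reApplyInnerSelf_apply, RCLike.re_mul_ofReal,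
    RCLike.conj_re]

theorem reApplyInnerSelf_sub_smul_apply {S : E →L[𝕜] E} (hS : S.IsSymmetric) (T : E →L[𝕜] E)
    (c : 𝕜) (x : E) :
    (T - c • S).reApplyInnerSelf x = T.reApplyInnerSelf x - re c * S.reApplyInnerSelf x := by
  rw [sub_eq_add_neg, ← neg_smul, reApplyInnerSelf_add_apply, reApplyInnerSelf_smul_apply hS,
    map_neg, neg_mul, ← sub_eq_add_neg]

theorem reApplyInnerSelf_ofReal_smul_one_sub_apply (l : ℝ) (T : E →L[𝕜] E) (x : E) :
    ((l : 𝕜) • 1 - T).reApplyInnerSelf x = l * ‖x‖ ^ 2 - T.reApplyInnerSelf x := by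
  simp only [ContinuousLinearMap.reApplyInnerSelf_apply, sub_apply, smul_apply,
    one_apply_eq_self, inner_sub_left, map_sub, inner_smul_left, RCLike.conj_ofReal,
    RCLike.re_ofReal_mul, inner_self_eq_norm_sq]

theorem abs_reApplyInnerSelf_le (T : E →L[𝕜] E) (x : E) :
    |T.reApplyInnerSelf x| ≤ ‖T‖ * ‖x‖ ^ 2 :=
  calc |T.reApplyInnerSelf x| ≤ ‖⟪T x, x⟫_𝕜‖ := RCLike.abs_re_le_norm _
    _ ≤ ‖T x‖ * ‖x‖ := norm_inner_le_norm _ _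
    _ ≤ ‖T‖ * ‖x‖ * ‖x‖ := by gcongr; exact T.le_opNorm x
    _ = ‖T‖ * ‖x‖ ^ 2 := by ring

theorem reApplyInnerSelf_add (hT : T.IsSymmetric) (x y : E) :
    T.reApplyInnerSelf (x + y) =
      T.reApplyInnerSelf x + T.reApplyInnerSelf y + 2 * re ⟪T x, y⟫_𝕜 := by
  have hcross : re ⟪T y, x⟫_𝕜 = re ⟪T x, y⟫_𝕜 := by
    rw [inner_re_symm]; exact congrArg RCLike.re (hT x y).symm
  simp only [ContinuousLinearMap.reApplyInnerSelf_apply, map_add, inner_add_left, inner_add_right,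
    hcross]
  ring

theorem norm_apply_sq_le_of_isPositive (hT : T.IsPositive) (x : E) :
    ‖T x‖ ^ 2 ≤ ‖T‖ * T.reApplyInnerSelf x := by
  rcases (norm_nonneg T).eq_or_lt with h0 | hpos
  · simp [norm_eq_zero.1 h0.symm]
  -- Evaluate the nonnegative form of `T` at `‖T‖ x - T x`.
  have hexpand : T.reApplyInnerSelf ((-(‖T‖ : 𝕜)) • x + T x) =
      ‖T‖ ^ 2 * T.reApplyInnerSelf x + T.reApplyInnerSelf (T x) - 2 * (‖T‖ * ‖T x‖ ^ 2) := by
    rw [reApplyInnerSelf_add hT.isSymmetric, T.reApplyInnerSelf_smul, map_smul, inner_smul_left,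
      inner_self_eq_norm_sq_to_K]
    simp only [norm_neg, RCLike.norm_ofReal, abs_norm, map_neg, RCLike.conj_ofReal, neg_mul,
      RCLike.re_ofReal_mul, ← RCLike.ofReal_pow, RCLike.ofReal_re]
    ring
  have hnonneg := hT.2 ((-(‖T‖ : 𝕜)) • x + T x)
  have hle := (abs_le.1 (abs_reApplyInnerSelf_le T (T x))).2
  refine le_of_mul_le_mul_left ?_ hpos
  linarith

theorem norm_smul_add_sq {u w : E} (hu : ‖u‖ = 1) (huw : ⟪u, w⟫_𝕜 = 0) (a : 𝕜) :
    ‖a • u + w‖ ^ 2 = ‖a‖ ^ 2 + ‖w‖ ^ 2 := by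
  have h := norm_add_sq_eq_norm_sq_add_norm_sq_of_inner_eq_zero (𝕜 := 𝕜) (a • u) w
    (by rw [inner_smul_left, huw, mul_zero])
  simpa only [← sq, norm_smul, hu, mul_one] using h

theorem exists_eq_smul_add_of_norm_eq_one {u : E} (hu : ‖u‖ = 1) (x : E) :
    ∃ (a : 𝕜) (w : E), ⟪u, w⟫_𝕜 = 0 ∧ x = a • u + w :=
  ⟨⟪u, x⟫_𝕜, x - ⟪u, x⟫_𝕜 • u, by
    simp [inner_sub_right, inner_smul_right, inner_self_eq_norm_sq_to_K, hu], by abel⟩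

theorem reApplyInnerSelf_starProjection_smul_add {u w : E} (hu : ‖u‖ = 1) (huw : ⟪u, w⟫_𝕜 = 0)
    (a : 𝕜) : (𝕜 ∙ u).starProjection.reApplyInnerSelf (a • u + w) = ‖a‖ ^ 2 := by
  have hP : (𝕜 ∙ u).starProjection (a • u + w) = a • u := by
    simp [Submodule.starProjection_unit_singleton 𝕜 hu, inner_add_right, inner_smul_right,
      inner_self_eq_norm_sq_to_K, hu, huw]
  rw [ContinuousLinearMap.reApplyInnerSelf_apply, hP, inner_add_right, inner_smul_left _ w, huw,
    mul_zero, add_zero, inner_self_eq_norm_sq_to_K, norm_smul, hu, mul_one,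
    ← RCLike.ofReal_pow, RCLike.ofReal_re]

end QuadraticForm

section ApproximateEigenvector

open RCLike

variable {𝕜 E : Type*} [RCLike 𝕜] [NormedAddCommGroup E] [InnerProductSpace 𝕜 E]
  {T : E →L[𝕜] E} {u w : E} {l : 𝕜} {ε : ℝ}

theorem abs_reApplyInnerSelf_smul_add_sub_le (hT : T.IsSymmetric) (hu : ‖u‖ = 1)
    (hul : ‖T u - l • u‖ ≤ ε) (huw : ⟪u, w⟫_𝕜 = 0) (a : 𝕜) :
    |T.reApplyInnerSelf (a • u + w) - (‖a‖ ^ 2 * T.reApplyInnerSelf u + T.reApplyInnerSelf w)| ≤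
      ε * ‖a • u + w‖ ^ 2 := by
  have hcross : ‖⟪T (a • u), w⟫_𝕜‖ ≤ ‖a‖ * (ε * ‖w‖) := by
    have hres : ⟪T u, w⟫_𝕜 = ⟪T u - l • u, w⟫_𝕜 := by
      rw [inner_sub_left, inner_smul_left, huw, mul_zero, sub_zero]
    rw [map_smul, inner_smul_left, norm_mul, RCLike.norm_conj, hres]
    gcongr
    exact (norm_inner_le_norm _ _).trans (by gcongr)
  have hε : 0 ≤ ε := (norm_nonneg _).trans hul
  rw [reApplyInnerSelf_add hT, T.reApplyInnerSelf_smul, add_sub_cancel_left, abs_mul, abs_two,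
    norm_smul_add_sq hu huw]
  calc 2 * |re ⟪T (a • u), w⟫_𝕜| ≤ 2 * (‖a‖ * (ε * ‖w‖)) := by
        gcongr; exact (RCLike.abs_re_le_norm _).trans hcross
    _ = ε * (2 * ‖a‖ * ‖w‖) := by ring
    _ ≤ ε * (‖a‖ ^ 2 + ‖w‖ ^ 2) := by gcongr; exact two_mul_le_add_sq _ _

theorem le_reApplyInnerSelf_of_le_sub_smul_starProjection (hT : T.IsSymmetric) (hu : ‖u‖ = 1)
    (hul : ‖T u - l • u‖ ≤ ε) (huw : ⟪u, w⟫_𝕜 = 0) {c a : 𝕜} {s : ℝ}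
    (hc : T.reApplyInnerSelf u - re c ≤ s - ε)
    (hs : s * ‖a • u + w‖ ^ 2 ≤
      (T - c • (𝕜 ∙ u).starProjection).reApplyInnerSelf (a • u + w)) :
    (s - ε) * ‖w‖ ^ 2 ≤ T.reApplyInnerSelf w := by
  have hsplit := (abs_le.1 (abs_reApplyInnerSelf_smul_add_sub_le hT hu hul huw a)).2
  rw [reApplyInnerSelf_sub_smul_apply (Submodule.starProjection_isSymmetric _),
    reApplyInnerSelf_starProjection_smul_add hu huw] at hs
  have hcoef := mul_le_mul_of_nonneg_left hc (sq_nonneg ‖a‖)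
  rw [norm_smul_add_sq hu huw] at hs hsplit
  linarith

theorem le_reApplyInnerSelf_smul_add (hT : T.IsSymmetric) (hu : ‖u‖ = 1)
    (hul : ‖T u - l • u‖ ≤ ε) (huw : ⟪u, w⟫_𝕜 = 0) {s : ℝ}
    (hsu : s ≤ T.reApplyInnerSelf u) (hsw : s * ‖w‖ ^ 2 ≤ T.reApplyInnerSelf w) (a : 𝕜) :
    (s - ε) * ‖a • u + w‖ ^ 2 ≤ T.reApplyInnerSelf (a • u + w) := by
  have hsplit := (abs_le.1 (abs_reApplyInnerSelf_smul_add_sub_le hT hu hul huw a)).1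
  have hcoef := mul_le_mul_of_nonneg_left hsu (sq_nonneg ‖a‖)
  rw [norm_smul_add_sq hu huw] at hsplit ⊢
  linarith

theorem le_reApplyInnerSelf_of_mem_sup_span (hT : T.IsSymmetric) (hu : ‖u‖ = 1)
    (hul : ‖T u - l • u‖ ≤ ε) {c : 𝕜} {s : ℝ} {V : Submodule 𝕜 E}
    (hc : T.reApplyInnerSelf u - re c ≤ s - ε) (hsu : s - ε ≤ T.reApplyInnerSelf u)
    (hV : ∀ v ∈ V, s * ‖v‖ ^ 2 ≤ (T - c • (𝕜 ∙ u).starProjection).reApplyInnerSelf v)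
    {x : E} (hx : x ∈ V ⊔ 𝕜 ∙ u) :
    (s - 2 * ε) * ‖x‖ ^ 2 ≤ T.reApplyInnerSelf x := by
  obtain ⟨v, hv, y, hy, rfl⟩ := Submodule.mem_sup.1 hx
  obtain ⟨b, rfl⟩ := Submodule.mem_span_singleton.1 hy
  obtain ⟨a, w, huw, rfl⟩ := exists_eq_smul_add_of_norm_eq_one (𝕜 := 𝕜) hu v
  have hsw := le_reApplyInnerSelf_of_le_sub_smul_starProjection hT hu hul huw hc (hV _ hv)
  have hcollect : a • u + w + b • u = (a + b) • u + w := by rw [add_smul]; abel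
  rw [hcollect, two_mul, ← sub_sub]
  exact le_reApplyInnerSelf_smul_add hT hu hul huw hsu hsw (a + b)

end ApproximateEigenvector

section Projection

theorem isOrthProj_starProjection (U : Submodule ℂ H) [U.HasOrthogonalProjection] :
    IsOrthProj U.starProjection :=
  ⟨isStarProjection_starProjection.isSelfAdjoint, U.isIdempotentElem_starProjection⟩

variable {E : Type*} [NormedAddCommGroup E] [InnerProductSpace ℂ E]

theorem opRank_starProjection (U : Submodule ℂ E) [U.HasOrthogonalProjection] :
    opRank U.starProjection = Module.rank ℂ U :=
  congrArg (fun W : Submodule ℂ E => Module.rank ℂ W) U.range_starProjection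

theorem opRank_smul_le (c : ℂ) (F : E →L[ℂ] E) : opRank (c • F) ≤ opRank F := by
  refine Submodule.rank_mono ?_
  rintro _ ⟨x, rfl⟩
  exact ⟨c • x, map_smul F c x⟩

end Projection

section RealPart

theorem reOp_eq_realPart (T : H →L[ℂ] H) : reOp T = realPart T := by
  rw [reOp, realPart_apply_coe, ContinuousLinearMap.star_eq_adjoint, ← Complex.coe_smul]
  norm_num

theorem isSelfAdjoint_reOp (T : H →L[ℂ] H) : IsSelfAdjoint (reOp T) := by
  rw [reOp_eq_realPart]
  exact (realPart T).2

theorem norm_reOp_le (T : H →L[ℂ] H) : ‖reOp T‖ ≤ ‖T‖ := by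
  rw [reOp_eq_realPart]
  exact realPart.norm_le T

theorem reOp_smul_add_smul {P : H →L[ℂ] H} (hP : IsSelfAdjoint P) (A : H →L[ℂ] H) (z c : ℂ) :
    reOp (z • (A + c • P)) = reOp (z • A) + ((z * c).re : ℂ) • P := by
  simp only [reOp, smul_add, smul_smul, map_add, map_smulₛₗ, hP.adjoint_eq, re_eq_add_conj]
  module

end RealPart

section RayleighBounds

variable {𝕜 E : Type*} [RCLike 𝕜] [NormedAddCommGroup E] [InnerProductSpace 𝕜 E]
  {k : ℕ} {T : E →L[𝕜] E}

/-- The lower bounds of the quadratic form of `T` on `k`-dimensional subspaces, whose supremum is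
`λ_k(T)`. The bounds are stated homogeneously rather than on unit vectors. -/
def rayleighLowerBounds (k : ℕ) (T : E →L[𝕜] E) : Set ℝ :=
  {t | ∃ V : Submodule 𝕜 E, Module.finrank 𝕜 V = k ∧
    ∀ x ∈ V, t * ‖x‖ ^ 2 ≤ T.reApplyInnerSelf x}

theorem forall_mem_mul_norm_sq_le_iff (V : Submodule 𝕜 E) (t : ℝ) :
    (∀ x ∈ V, t * ‖x‖ ^ 2 ≤ T.reApplyInnerSelf x) ↔
      ∀ x ∈ V, ‖x‖ = 1 → t ≤ T.reApplyInnerSelf x := by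
  refine ⟨fun h x hx hx1 => by simpa [hx1] using h x hx, fun h x hx => ?_⟩
  rcases eq_or_ne x 0 with rfl | hx0
  · simp [ContinuousLinearMap.reApplyInnerSelf_apply]
  have hunit := h _ (V.smul_mem ((‖x‖ : 𝕜)⁻¹) hx) (norm_smul_inv_norm hx0)
  rw [T.reApplyInnerSelf_smul, norm_inv, RCLike.norm_ofReal, abs_norm, inv_pow,
    ← div_eq_inv_mul] at hunit
  exact (le_div_iff₀ (by positivity)).1 hunit

theorem exists_unit_le_of_mem_rayleighLowerBounds (hk0 : k ≠ 0) {t : ℝ}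
    (ht : t ∈ rayleighLowerBounds k T) : ∃ x : E, ‖x‖ = 1 ∧ t ≤ T.reApplyInnerSelf x := by
  obtain ⟨V, hV, h⟩ := ht
  have : Nontrivial V := Module.nontrivial_of_finrank_pos (R := 𝕜) (by omega)
  obtain ⟨x, hxV, hx0⟩ := V.exists_mem_ne_zero_of_ne_bot (V.nontrivial_iff_ne_bot.1 this)
  exact ⟨(‖x‖ : 𝕜)⁻¹ • x, norm_smul_inv_norm hx0, (forall_mem_mul_norm_sq_le_iff V t).1 h _
    (V.smul_mem _ hxV) (norm_smul_inv_norm hx0)⟩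

theorem bddAbove_rayleighLowerBounds (hk0 : k ≠ 0) (T : E →L[𝕜] E) :
    BddAbove (rayleighLowerBounds k T) := by
  refine ⟨‖T‖, fun t ht => ?_⟩
  obtain ⟨x, hx, htx⟩ := exists_unit_le_of_mem_rayleighLowerBounds hk0 ht
  simpa [hx] using htx.trans (abs_le.1 (abs_reApplyInnerSelf_le T x)).2

theorem neg_norm_mem_rayleighLowerBounds (hk : (k : Cardinal) ≤ Module.rank 𝕜 E)
    (T : E →L[𝕜] E) : -‖T‖ ∈ rayleighLowerBounds k T := by
  obtain ⟨V, -, hV⟩ := exists_le_finrank_eq (U := (⊤ : Submodule 𝕜 E)) (by rwa [rank_top])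
  refine ⟨V, hV, fun x _ => ?_⟩
  rw [neg_mul]
  exact (abs_le.1 (abs_reApplyInnerSelf_le T x)).1

theorem rayleighLowerBounds_add_subset {r : ℕ} {F : E →L[𝕜] E}
    (hF : (F : E →ₗ[𝕜] E).rank ≤ r) :
    rayleighLowerBounds (k + r) T ⊆ rayleighLowerBounds k (T + F) := by
  rintro t ⟨V, hV, h⟩
  have hrank : ((k + r : ℕ) : Cardinal) ≤ Module.rank 𝕜 V := by
    rw [← hV]
    exact Cardinal.natCast_toNat_le _
  obtain ⟨W, hW, hdim⟩ := exists_le_inf_ker_finrank_eq hrank hF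
  refine ⟨W, hdim, fun x hx => ?_⟩
  have hFx : F x = 0 := (hW hx).2
  simpa [ContinuousLinearMap.reApplyInnerSelf_apply, hFx] using h x (hW hx).1

end RayleighBounds

section Lambda

variable {E : Type*} [NormedAddCommGroup E] [InnerProductSpace ℂ E] {k : ℕ} {T : E →L[ℂ] E}

theorem lambdaSA_eq_sSup (k : ℕ) (T : E →L[ℂ] E) :
    lambdaSA k T = sSup (rayleighLowerBounds k T) := by
  have hform (x : E) : (⟪x, T x⟫_ℂ).re = T.reApplyInnerSelf x := inner_re_symm (𝕜 := ℂ) x (T x)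
  simp only [lambdaSA, rayleighLowerBounds, forall_mem_mul_norm_sq_le_iff, hform]

theorem isLUB_lambdaSA (hk0 : k ≠ 0) (hk : (k : Cardinal) ≤ Module.rank ℂ E) (T : E →L[ℂ] E) :
    IsLUB (rayleighLowerBounds k T) (lambdaSA k T) := by
  rw [lambdaSA_eq_sSup]
  exact isLUB_csSup ⟨_, neg_norm_mem_rayleighLowerBounds hk T⟩ (bddAbove_rayleighLowerBounds hk0 T)

theorem reApplyInnerSelf_le_lambdaSA_one (T : E →L[ℂ] E) (x : E) :
    T.reApplyInnerSelf x ≤ lambdaSA 1 T * ‖x‖ ^ 2 := by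
  rcases eq_or_ne x 0 with rfl | hx0
  · simp [ContinuousLinearMap.reApplyInnerSelf_apply]
  have hpos : 0 < ‖x‖ ^ 2 := by positivity
  rw [← div_le_iff₀ hpos, lambdaSA_eq_sSup]
  refine le_csSup (bddAbove_rayleighLowerBounds one_ne_zero T)
    ⟨ℂ ∙ x, finrank_span_singleton hx0, fun y hy => ?_⟩
  obtain ⟨a, rfl⟩ := Submodule.mem_span_singleton.1 hy
  rw [T.reApplyInnerSelf_smul, norm_smul, mul_pow, mul_left_comm, div_mul_cancel₀ _ hpos.ne']

-- Weyl's inequality.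
theorem lambdaSA_add_le_lambdaSA_add {r : ℕ} {F : E →L[ℂ] E} (hk0 : k ≠ 0)
    (hk : ((k + r : ℕ) : Cardinal) ≤ Module.rank ℂ E) (hF : opRank F ≤ r) :
    lambdaSA (k + r) T ≤ lambdaSA k (T + F) := by
  have hk' : (k : Cardinal) ≤ Module.rank ℂ E := le_trans (by gcongr; omega) hk
  exact (isLUB_lambdaSA (by omega) hk T).mono (isLUB_lambdaSA hk0 hk' (T + F))
    (rayleighLowerBounds_add_subset hF)

end Lambda

section NearMaximizer

variable {E : Type*} [NormedAddCommGroup E] [InnerProductSpace ℂ E] {k : ℕ} {T : E →L[ℂ] E}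

theorem isPositive_lambdaSA_one_smul_one_sub (hT : T.IsSymmetric) :
    ((lambdaSA 1 T : ℂ) • 1 - T).IsPositive := by
  have hform := reApplyInnerSelf_ofReal_smul_one_sub_apply (𝕜 := ℂ) (lambdaSA 1 T) T
  refine ContinuousLinearMap.isPositive_def.2
    ⟨(LinearMap.IsSymmetric.id.smul (conj_ofReal _)).sub hT, fun x => ?_⟩
  exact (sub_nonneg.2 (reApplyInnerSelf_le_lambdaSA_one T x)).trans_eq (hform x).symm

theorem exists_unit_approx_eigenvector_lambdaSA_one [Nontrivial E] (hT : T.IsSymmetric) {ε : ℝ}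
    (hε : 0 < ε) :
    ∃ u : E, ‖u‖ = 1 ∧ lambdaSA 1 T - ε ≤ T.reApplyInnerSelf u ∧
      ‖T u - (lambdaSA 1 T : ℂ) • u‖ ≤ ε := by
  set l : ℝ := lambdaSA 1 T
  set B : E →L[ℂ] E := (l : ℂ) • 1 - T
  obtain ⟨δ, hδ, hδε, hBδ⟩ : ∃ δ > 0, δ ≤ ε ∧ ‖B‖ * δ ≤ ε ^ 2 := by
    refine ⟨min ε (ε ^ 2 / (‖B‖ + 1)), by positivity, min_le_left _ _, ?_⟩
    calc ‖B‖ * min ε (ε ^ 2 / (‖B‖ + 1)) ≤ (‖B‖ + 1) * (ε ^ 2 / (‖B‖ + 1)) :=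
          mul_le_mul (by linarith) (min_le_right _ _) (by positivity) (by positivity)
      _ = ε ^ 2 := by field_simp
  have hone : ((1 : ℕ) : Cardinal) ≤ Module.rank ℂ E := by
    rw [Nat.cast_one]
    exact Cardinal.one_le_iff_pos.2 rank_pos
  obtain ⟨t, ht, hlt, -⟩ :=
    (isLUB_lambdaSA one_ne_zero hone T).exists_between (sub_lt_self l hδ)
  obtain ⟨u, hu, htu⟩ := exists_unit_le_of_mem_rayleighLowerBounds one_ne_zero ht
  refine ⟨u, hu, by linarith, ?_⟩
  have hform : B.reApplyInnerSelf u ≤ δ := by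
    have hB := reApplyInnerSelf_ofReal_smul_one_sub_apply (𝕜 := ℂ) l T u
    rw [hu, one_pow, mul_one] at hB
    exact hB.le.trans (by linarith)
  have hBu : ‖B u‖ ^ 2 ≤ ε ^ 2 :=
    calc ‖B u‖ ^ 2 ≤ ‖B‖ * B.reApplyInnerSelf u :=
          norm_apply_sq_le_of_isPositive (isPositive_lambdaSA_one_smul_one_sub hT) u
      _ ≤ ‖B‖ * δ := by gcongr
      _ ≤ ε ^ 2 := hBδ
  rw [norm_sub_rev]
  exact le_of_sq_le_sq hBu hε.le

theorem le_lambdaSA_one_of_mem_rayleighLowerBounds_sub {P : E →L[ℂ] E} (hP : P.IsPositive) {c : ℂ}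
    (hc : 0 ≤ RCLike.re c) {t : ℝ} (hk0 : k ≠ 0) (ht : t ∈ rayleighLowerBounds k (T - c • P)) :
    t ≤ lambdaSA 1 T := by
  obtain ⟨x, hx, htx⟩ := exists_unit_le_of_mem_rayleighLowerBounds hk0 ht
  have hTx := reApplyInnerSelf_le_lambdaSA_one T x
  have hPx := mul_nonneg hc (hP.2 x)
  rw [hx, one_pow, mul_one] at hTx
  rw [reApplyInnerSelf_sub_smul_apply hP.isSymmetric] at htx
  linarith

theorem lambdaSA_sub_smul_starProjection_le (hT : T.IsSymmetric) {M ε : ℝ} (hM : ‖T‖ ≤ M)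
    (hk0 : k ≠ 0) (hk : ((k + 1 : ℕ) : Cardinal) ≤ Module.rank ℂ E) {u : E} (hu : ‖u‖ = 1)
    (hε : 0 < ε) (hmax : lambdaSA 1 T - ε ≤ T.reApplyInnerSelf u)
    (heig : ‖T u - (lambdaSA 1 T : ℂ) • u‖ ≤ ε) :
    lambdaSA k (T - ((2 * M : ℝ) : ℂ) • (ℂ ∙ u).starProjection) ≤
      lambdaSA (k + 1) T + 2 * ε := by
  have hk' : (k : Cardinal) ≤ Module.rank ℂ E := le_trans (by gcongr; omega) hk
  have hcre : RCLike.re ((2 * M : ℝ) : ℂ) = 2 * M := ofReal_re _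
  have hlub := isLUB_lambdaSA k.succ_ne_zero hk T
  refine (isLUB_lambdaSA hk0 hk' _).2 fun s hs => ?_
  rcases lt_or_ge (s - ε) (-‖T‖) with hsmall | hlarge
  · have := hlub.1 (neg_norm_mem_rayleighLowerBounds hk T)
    linarith
  have hsmax : s ≤ lambdaSA 1 T :=
    le_lambdaSA_one_of_mem_rayleighLowerBounds_sub
      (Submodule.isSymmetricProjection_starProjection (ℂ ∙ u)).isPositive
      (by rw [hcre]; linarith [norm_nonneg T]) hk0 hs
  have hTu : T.reApplyInnerSelf u ≤ ‖T‖ := by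
    simpa [hu] using (abs_le.1 (abs_reApplyInnerSelf_le T u)).2
  obtain ⟨V, hV, hsV⟩ := hs
  have huV : u ∉ V := fun huV => by
    have hPu := reApplyInnerSelf_starProjection_smul_add (𝕜 := ℂ) hu (inner_zero_right u) 1
    have hsu := hsV u huV
    rw [one_smul, add_zero, norm_one, one_pow] at hPu
    rw [reApplyInnerSelf_sub_smul_apply (Submodule.starProjection_isSymmetric _), hPu, hu,
      hcre] at hsu
    linarith
  have : FiniteDimensional ℂ V := Module.finite_of_finrank_pos (by omega)
  have hsup : s - 2 * ε ∈ rayleighLowerBounds (k + 1) T :=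
    ⟨V ⊔ ℂ ∙ u, by rw [finrank_sup_span_singleton_of_notMem huV, hV], fun _ =>
      le_reApplyInnerSelf_of_mem_sup_span hT hu heig
        (by rw [hcre]; linarith) (by linarith) hsV⟩
  linarith [hlub.1 hsup]

end NearMaximizer

theorem isGLB_lambdaSA_sub_smul {k : ℕ} {T : H →L[ℂ] H} (hT : IsSelfAdjoint T) {M : ℝ}
    (hM : ‖T‖ ≤ M) (hk0 : k ≠ 0) (hk : ((k + 1 : ℕ) : Cardinal) ≤ Module.rank ℂ H) :
    IsGLB ((fun P => lambdaSA k (T - ((2 * M : ℝ) : ℂ) • P)) ''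
      {P : H →L[ℂ] H | IsOrthProj P ∧ opRank P = 1}) (lambdaSA (k + 1) T) := by
  constructor
  · rintro _ ⟨P, ⟨-, hP⟩, rfl⟩
    simp only [sub_eq_add_neg, ← neg_smul]
    exact lambdaSA_add_le_lambdaSA_add hk0 hk
      ((opRank_smul_le _ P).trans (by rw [hP, Nat.cast_one]))
  · intro m hm
    have : Nontrivial H := (rank_pos_iff_nontrivial (R := ℂ)).1 (lt_of_lt_of_le (by simp) hk)
    refine le_of_forall_pos_le_add fun ε hε => ?_
    obtain ⟨u, hu, hmax, heig⟩ :=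
      exists_unit_approx_eigenvector_lambdaSA_one hT.isSymmetric (half_pos hε)
    have hu0 : u ≠ 0 := norm_ne_zero_iff.1 (by rw [hu]; exact one_ne_zero)
    have hrank : opRank (ℂ ∙ u).starProjection = 1 := by
      rw [opRank_starProjection, Module.rank_eq_one_iff_finrank_eq_one, finrank_span_singleton hu0]
    have hmu := hm ⟨_, ⟨isOrthProj_starProjection (ℂ ∙ u), hrank⟩, rfl⟩
    have hle := lambdaSA_sub_smul_starProjection_le hT.isSymmetric hM hk0 hk hu (half_pos hε)
      hmax heig
    rw [mul_div_cancel₀ ε two_ne_zero] at hle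
    exact hmu.trans hle

/-- For `2 ≤ k ≤ dim ℋ`, `Ω_k(A)` is the intersection of the sets
`Ω_{k-1}(A + 2e^{iξ}‖A‖P)` over all `ξ ∈ [0,2π)` and all rank-one orthogonal
projections `P`. -/
theorem omegaK_eq_iInter_rank_one
    (k : ℕ) (hk2 : 2 ≤ k) (hk : (k : Cardinal) ≤ Module.rank ℂ H)
    (A : H →L[ℂ] H) :
    omegaK k A =
      ⋂ ξ ∈ Set.Ico (0 : ℝ) (2 * Real.pi),
        ⋂ P ∈ {P : H →L[ℂ] H | IsOrthProj P ∧ opRank P = 1},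
          omegaK (k - 1) (A + (2 * Complex.exp (ξ * Complex.I) * (‖A‖ : ℂ)) • P) := by
  obtain ⟨j, rfl⟩ : ∃ j, k = j + 1 := ⟨k - 1, by omega⟩
  have hj : j ≠ 0 := by omega
  ext μ
  simp only [Set.mem_iInter, Nat.add_sub_cancel]
  refine ⟨fun hμ ξ _ P hP θ hθ => (hμ θ hθ).trans ?_, fun hμ θ hθ => ?_⟩
  · rw [reOp_smul_add_smul hP.1.1]
    exact lambdaSA_add_le_lambdaSA_add hj hk
      ((opRank_smul_le _ P).trans (by rw [hP.2, Nat.cast_one]))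
  · obtain ⟨ξ, hξ, hphase⟩ : ∃ ξ ∈ Set.Ico (0 : ℝ) (2 * Real.pi),
        exp (ξ * I) = -(exp (θ * I))⁻¹ :=
      exists_mem_Ico_exp_mul_I_eq (by rw [norm_neg, norm_inv, norm_exp_ofReal_mul_I, inv_one])
    have hnorm : ‖reOp (exp (θ * I) • A)‖ ≤ ‖A‖ :=
      (norm_reOp_le _).trans (by rw [norm_smul, norm_exp_ofReal_mul_I, one_mul])
    have hcoeff : exp (θ * I) * (2 * exp (ξ * I) * ‖A‖) = ((-(2 * ‖A‖) : ℝ) : ℂ) := by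
      rw [hphase]
      field_simp [exp_ne_zero]
      push_cast
      ring
    refine (isGLB_lambdaSA_sub_smul (isSelfAdjoint_reOp _) hnorm hj hk).2 ?_
    rintro _ ⟨P, hP, rfl⟩
    have hμP := hμ ξ hξ P hP θ hθ
    rwa [reOp_smul_add_smul hP.1.1, hcoeff, ofReal_re, ofReal_neg, neg_smul,
      ← sub_eq_add_neg] at hμP
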